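/- arXiv:2010.01448 — 3 statements merged into one kernel-verified Lean document; each statement's English description precedes it below -/
import Mathlib

section
/- Let (X, 𝒜, μ) be a measure space, q ∈ [1,2), κ ∈ (0,1), and let w, w₁, w₂ : X → ℂ be measurable functions such that w·w₁ and w·w₂ are each nonzero on a set of positive measure, and w = 0 on the set {x ∈ X : w₁(x) = 0 and w₂(x) = 0}. Define M₁ = sup{ ‖φw‖_{L^q} / (‖φw₁‖_{L²}^κ · ‖φw₂‖_{L²}^{1-κ}) : φ measurable, φw₁, φw₂ ∈ L²(X), each nonzero on a set of positive measure } and M₂ = sup_{t>0} ( t^{(1-κ)/2} ‖ w / (|w₁|² + t|w₂|²)^{1/2} ‖_{L^{2q/(2-q)}} ), with the convention 0/0 = 0. Then M₁ ≤ (1-κ)^{(κ-1)/2} κ^{-κ/2} M₂. Moreover, if μ is σ-finite, or if there exists t* > 0 such that w·(|w₁|² + t*|w₂|²)^{-1/2} ∈ L^{2q/(2-q)}(X), then M₁ = (1-κ)^{(κ-1)/2} κ^{-κ/2} M₂. -/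
open MeasureTheory

noncomputable section

/-- `M₁ = sup over admissible φ of ‖φw‖_{L^q} / (‖φw₁‖_{L²}^κ ‖φw₂‖_{L²}^{1-κ})`,
where φ ranges over measurable functions with `φw₁, φw₂ ∈ L²` each nonzero on a set of
positive measure. -/
def M1 {X : Type*} [MeasurableSpace X] (μ : Measure X) (q κ : ℝ) (w w₁ w₂ : X → ℂ) :
    ENNReal :=
  ⨆ (φ : X → ℂ) (_ : Measurable φ ∧
      MemLp (fun x => φ x * w₁ x) 2 μ ∧ MemLp (fun x => φ x * w₂ x) 2 μ ∧
      μ {x | φ x * w₁ x ≠ 0} ≠ 0 ∧ μ {x | φ x * w₂ x ≠ 0} ≠ 0),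
    eLpNorm (fun x => φ x * w x) (ENNReal.ofReal q) μ /
      (eLpNorm (fun x => φ x * w₁ x) 2 μ ^ κ *
        eLpNorm (fun x => φ x * w₂ x) 2 μ ^ (1 - κ))

/-- `M₂ = sup_{t>0} t^{(1-κ)/2} ‖ w / (|w₁|² + t|w₂|²)^{1/2} ‖_{L^{2q/(2-q)}}`
(with the convention `0/0 = 0`, which is the Lean convention for complex division). -/
def M2 {X : Type*} [MeasurableSpace X] (μ : Measure X) (q κ : ℝ) (w w₁ w₂ : X → ℂ) :
    ENNReal :=
  ⨆ (t : ℝ) (_ : 0 < t),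
    ENNReal.ofReal (t ^ ((1 - κ) / 2)) *
      eLpNorm (fun x => w x / ((Real.sqrt (‖w₁ x‖ ^ 2 + t * ‖w₂ x‖ ^ 2) : ℝ) : ℂ))
        (ENNReal.ofReal (2 * q / (2 - q))) μ

/-
Let `1 / q = 1 / 2 + 1 / p` and `g_t = (|w₁|² + t |w₂|²) ^ (1 / 2)`, so that
`‖φ g_t‖₂² = ‖φ w₁‖₂² + t ‖φ w₂‖₂²`. Weighted AM-GM bounds a constant `C` times
`t ^ ((1 - κ) / 2) ‖φ w₁‖₂ ^ κ ‖φ w₂‖₂ ^ (1 - κ)` by `‖φ g_t‖₂`, with equality for a suitable `t`;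
for that `t`, Hölder's inequality `‖φ w‖_q ≤ ‖φ g_t‖₂ ‖w / g_t‖_p` gives the upper bound on `M₁`.
Conversely, fix `t`. If `w / g_t` is in `L^p`, then `φ = |w / g_t| ^ (p / 2) / g_t` is admissible
and turns Hölder's inequality into an equality, which bounds `M₁` from below. In general, one
restricts `μ` to sets increasing to `X` on which `w / g_t` is in `L^p`: these exist as soon as `μ`
is σ-finite on `{w ≠ 0}`, because the measure `|w / g_t| ^ p μ` is then σ-finite.
-/

open Filter Function Set
open scoped ENNReal Topology

/-- The constant of the theorem, as an extended nonnegative real. It is the best constant in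
`C t ^ ((1 - κ) / 2) a ^ κ b ^ (1 - κ) ≤ √(a² + t b²)`. -/
def sharpConst (κ : ℝ) : ℝ≥0∞ :=
  ENNReal.ofReal ((1 - κ) ^ ((κ - 1) / 2) * κ ^ (-(κ / 2)))

section SharpConst

variable {κ t : ℝ}

lemma rpow_mul_rpow_one_sub_le (hκ0 : 0 < κ) (hκ1 : κ < 1) (x y : ℝ≥0∞) :
    x ^ κ * y ^ (1 - κ) ≤ ENNReal.ofReal κ * x + ENNReal.ofReal (1 - κ) * y := by
  have hκ' : 0 < 1 - κ := sub_pos.2 hκ1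
  have hconj : Real.HolderConjugate κ⁻¹ (1 - κ)⁻¹ :=
    ⟨by simp, inv_pos.2 hκ0, inv_pos.2 hκ'⟩
  simpa [ENNReal.rpow_rpow_inv, hκ0.ne', hκ'.ne', ENNReal.ofReal_inv_of_pos, hκ0, hκ1,
    div_eq_mul_inv, mul_comm] using ENNReal.young_inequality (x ^ κ) (y ^ (1 - κ)) hconj

lemma ofReal_mul_div_add_ofReal_one_sub_mul_div (hκ0 : 0 < κ) (hκ1 : κ < 1) (x y : ℝ≥0∞) :
    ENNReal.ofReal κ * (x / ENNReal.ofReal κ) +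
      ENNReal.ofReal (1 - κ) * (y / ENNReal.ofReal (1 - κ)) = x + y := by
  rw [ENNReal.mul_div_cancel (by simpa) (by simp), ENNReal.mul_div_cancel (by simpa) (by simp)]

lemma sharpConst_mul_eq (hκ0 : 0 < κ) (hκ1 : κ < 1) (ht : 0 < t) (A B : ℝ≥0∞) :
    sharpConst κ * (ENNReal.ofReal (t ^ ((1 - κ) / 2)) * (A ^ κ * B ^ (1 - κ))) =
      ((A ^ 2 / ENNReal.ofReal κ) ^ κ *
        (ENNReal.ofReal t * B ^ 2 / ENNReal.ofReal (1 - κ)) ^ (1 - κ)) ^ (1 / 2 : ℝ) := by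
  have hκ' : 0 < 1 - κ := sub_pos.2 hκ1
  have hhalf : (0 : ℝ) ≤ 1 / 2 := by norm_num
  have sqrt_sq_rpow (x : ℝ≥0∞) (r : ℝ) : ((x ^ 2) ^ r) ^ (1 / 2 : ℝ) = x ^ r := by
    rw [← ENNReal.rpow_natCast, ← ENNReal.rpow_mul, ← ENNReal.rpow_mul]
    congr 1
    push_cast
    ring
  have sqrt_inv_rpow (x : ℝ≥0∞) (r : ℝ) : ((x⁻¹) ^ r) ^ (1 / 2 : ℝ) = x ^ (-(r / 2)) := by
    rw [ENNReal.inv_rpow, ENNReal.inv_rpow, ← ENNReal.rpow_mul, ENNReal.rpow_neg, mul_one_div]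
  rw [sharpConst, ENNReal.ofReal_mul (by positivity), ← ENNReal.ofReal_rpow_of_pos hκ',
    ← ENNReal.ofReal_rpow_of_pos hκ0, ← ENNReal.ofReal_rpow_of_pos ht]
  simp only [div_eq_mul_inv (_ ^ 2), div_eq_mul_inv (_ * _), ENNReal.mul_rpow_of_nonneg _ _ hκ0.le,
    ENNReal.mul_rpow_of_nonneg _ _ hκ'.le, ENNReal.mul_rpow_of_nonneg _ _ hhalf, sqrt_sq_rpow,
    sqrt_inv_rpow]
  rw [← ENNReal.rpow_mul (ENNReal.ofReal t), mul_one_div,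
    show (κ - 1) / 2 = -((1 - κ) / 2) by ring]
  ring

lemma sharpConst_mul_le (hκ0 : 0 < κ) (hκ1 : κ < 1) (ht : 0 < t) (A B : ℝ≥0∞) :
    sharpConst κ * (ENNReal.ofReal (t ^ ((1 - κ) / 2)) * (A ^ κ * B ^ (1 - κ))) ≤
      (A ^ 2 + ENNReal.ofReal t * B ^ 2) ^ (1 / 2 : ℝ) := by
  rw [sharpConst_mul_eq hκ0 hκ1 ht, ← ofReal_mul_div_add_ofReal_one_sub_mul_div hκ0 hκ1 (A ^ 2)]
  gcongr
  exact rpow_mul_rpow_one_sub_le hκ0 hκ1 _ _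

lemma exists_sharpConst_mul_eq (hκ0 : 0 < κ) (hκ1 : κ < 1) {A B : ℝ≥0∞} (hA0 : A ≠ 0)
    (hA : A ≠ ∞) (hB0 : B ≠ 0) (hB : B ≠ ∞) : ∃ t : ℝ, 0 < t ∧
      sharpConst κ * (ENNReal.ofReal (t ^ ((1 - κ) / 2)) * (A ^ κ * B ^ (1 - κ))) =
        (A ^ 2 + ENNReal.ofReal t * B ^ 2) ^ (1 / 2 : ℝ) := by
  have hκ' : 0 < 1 - κ := sub_pos.2 hκ1
  have ha := ENNReal.toReal_pos hA0 hA
  have hb := ENNReal.toReal_pos hB0 hB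
  set t := (1 - κ) / κ * (A.toReal / B.toReal) ^ 2 with ht_def
  have ht : 0 < t := by positivity
  -- The choice of `t` balances the two terms of the weighted AM-GM inequality.
  have hbalance :
      ENNReal.ofReal t * B ^ 2 / ENNReal.ofReal (1 - κ) = A ^ 2 / ENNReal.ofReal κ := by
    rw [← ENNReal.ofReal_toReal hA, ← ENNReal.ofReal_toReal hB, ← ENNReal.ofReal_pow ha.le,
      ← ENNReal.ofReal_pow hb.le, ← ENNReal.ofReal_mul ht.le,
      ← ENNReal.ofReal_div_of_pos hκ', ← ENNReal.ofReal_div_of_pos hκ0, ht_def]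
    congr 1
    field_simp
  refine ⟨t, ht, ?_⟩
  rw [sharpConst_mul_eq hκ0 hκ1 ht, ← ofReal_mul_div_add_ofReal_one_sub_mul_div hκ0 hκ1 (A ^ 2),
    hbalance, ← ENNReal.rpow_add_of_nonneg _ _ hκ0.le hκ'.le, ← add_mul,
    ← ENNReal.ofReal_add hκ0.le hκ'.le]
  simp only [add_sub_cancel, ENNReal.rpow_one, ENNReal.ofReal_one, one_mul]

end SharpConst

section Exhaustion

variable {X E : Type*} [MeasurableSpace X] {μ : Measure X} [NormedAddCommGroup E] {f : X → E}
  {p : ℝ≥0∞} {S : Set X} {A : ℕ → Set X}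

lemma sigmaFinite_restrict_support_of_memLp (hf : MemLp f p μ) (hp0 : p ≠ 0) (hp : p ≠ ∞) :
    SigmaFinite (μ.restrict (support f)) := by
  obtain ⟨T, hT, hfT, hσ⟩ := (hf.aefinStronglyMeasurable hp0 hp).exists_set_sigmaFinite
  have hsupp : support f ≤ᵐ[μ] T := by
    filter_upwards [(ae_restrict_iff' hT.compl).1 hfT] with x hx hfx
    exact not_not.1 fun hxT => hfx (hx hxT)
  exact Measure.sigmaFinite_of_le _ (Measure.restrict_mono' hsupp le_rfl)

lemma exists_monotone_memLp_restrict (hf : AEStronglyMeasurable f μ) (hS : MeasurableSet S)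
    (hfS : support f ⊆ S) [SigmaFinite (μ.restrict S)] (hp0 : p ≠ 0) (hp : p ≠ ∞) :
    ∃ A : ℕ → Set X, Monotone A ∧ (∀ n, MeasurableSet (A n)) ∧ ⋃ n, A n = univ ∧
      ∀ n, MemLp f p (μ.restrict (A n)) := by
  let density : X → ℝ≥0∞ := fun x => ‖f x‖ₑ ^ p.toReal
  let ν := μ.withDensity density
  have hdensity : S.indicator density = density := by
    refine indicator_eq_self.2 fun x hx => hfS fun hfx => hx ?_
    simp [density, hfx, ENNReal.toReal_pos hp0 hp]
  have : SigmaFinite ν := by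
    rw [show ν = (μ.restrict S).withDensity density by
      rw [← withDensity_indicator hS, hdensity]]
    exact SigmaFinite.withDensity_of_ne_top' fun x =>
      ENNReal.rpow_ne_top_of_nonneg ENNReal.toReal_nonneg enorm_ne_top
  refine ⟨spanningSets ν, monotone_spanningSets ν, measurableSet_spanningSets ν,
    iUnion_spanningSets ν, fun n => ⟨hf.restrict, ?_⟩⟩
  rw [eLpNorm_lt_top_iff_lintegral_rpow_enorm_lt_top hp0 hp,
    ← withDensity_apply _ (measurableSet_spanningSets ν n)]
  exact measure_spanningSets_lt_top ν n

lemma tendsto_eLpNorm_restrict (hA : Monotone A) (hAuniv : ⋃ n, A n = univ) (hp0 : p ≠ 0)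
    (hp : p ≠ ∞) :
    Tendsto (fun n => eLpNorm f p (μ.restrict (A n))) atTop (𝓝 (eLpNorm f p μ)) := by
  simp only [eLpNorm_eq_lintegral_rpow_enorm_toReal hp0 hp]
  refine (ENNReal.continuous_rpow_const.tendsto _).comp ?_
  conv_rhs => rw [← Measure.restrict_univ (μ := μ), ← hAuniv,
    setLIntegral_iUnion_of_directed _ hA.directed_le]
  exact tendsto_atTop_iSup fun m n hmn => lintegral_mono_set (hA hmn)

lemma tendsto_restrict_apply (hA : Monotone A) (hAm : ∀ n, MeasurableSet (A n))
    (hAuniv : ⋃ n, A n = univ) (B : Set X) :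
    Tendsto (fun n => μ.restrict (A n) B) atTop (𝓝 (μ B)) := by
  simp only [Measure.restrict_apply' (hAm _)]
  have hmono : Monotone fun n => B ∩ A n := fun m n hmn => inter_subset_inter_right B (hA hmn)
  simpa only [← inter_iUnion, hAuniv, inter_univ] using! tendsto_measure_iUnion_atTop (μ := μ) hmono

end Exhaustion

/-- For real exponents `1 / q = 1 / 2 + 1 / p`, the function `holderExtremizer (p / 2) w g` is the
`φ` that turns `‖φ w‖_q ≤ ‖φ g‖_2 ‖w / g‖_p` into an equality. -/
def holderExtremizer {X 𝕜 : Type*} [RCLike 𝕜] (a : ℝ) (w g : X → 𝕜) (x : X) : 𝕜 :=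
  ((‖w x / g x‖ ^ a : ℝ) : 𝕜) / g x

section Holder

variable {X 𝕜 : Type*} [RCLike 𝕜] {φ w g : X → 𝕜} {a : ℝ}

lemma holderExtremizer_ne_zero {x : X} (hw : w x ≠ 0) (hg : g x ≠ 0) :
    holderExtremizer a w g x ≠ 0 := by
  have hpos : 0 < ‖w x / g x‖ := norm_pos_iff.2 (div_ne_zero hw hg)
  exact div_ne_zero (RCLike.ofReal_ne_zero.2 (by positivity)) hg

variable [MeasurableSpace X] {μ : Measure X} {p q r : ℝ≥0∞}

lemma eLpNorm_mul_le_eLpNorm_mul_mul_eLpNorm_div [ENNReal.HolderTriple p q r]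
    (hφg : AEStronglyMeasurable (fun x => φ x * g x) μ)
    (hwg : AEStronglyMeasurable (fun x => w x / g x) μ) (h0 : ∀ x, g x = 0 → w x = 0) :
    eLpNorm (fun x => φ x * w x) r μ ≤
      eLpNorm (fun x => φ x * g x) p μ * eLpNorm (fun x => w x / g x) q μ := by
  have hfactor : (fun x => φ x * w x) = (fun x => φ x * g x) • fun x => w x / g x := by
    ext x
    rw [Pi.smul_apply', smul_eq_mul, mul_assoc, mul_div_cancel_of_imp' (h0 x)]
  rw [hfactor]
  exact eLpNorm_smul_le_mul_eLpNorm hwg hφg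

lemma measurable_holderExtremizer (hw : Measurable w) (hg : Measurable g) :
    Measurable (holderExtremizer a w g) := by
  unfold holderExtremizer
  fun_prop

lemma eLpNorm_holderExtremizer_mul_right (ha : 0 < a) :
    eLpNorm (fun x => holderExtremizer a w g x * g x) p μ =
      eLpNorm (fun x => w x / g x) (p * ENNReal.ofReal a) μ ^ a := by
  rw [← eLpNorm_norm_rpow _ ha]
  refine eLpNorm_congr_norm_ae (.of_forall fun x => ?_)
  by_cases hg : g x = 0
  · simp [hg, ha.ne']
  · simp [holderExtremizer, hg]

lemma eLpNorm_holderExtremizer_mul_left (ha : 0 < a) (hpq : p * ENNReal.ofReal a = q)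
    (hrq : r * ENNReal.ofReal (a + 1) = q) :
    eLpNorm (fun x => holderExtremizer a w g x * w x) r μ =
      eLpNorm (fun x => holderExtremizer a w g x * g x) p μ * eLpNorm (fun x => w x / g x) q μ := by
  have ha1 : 0 < a + 1 := by positivity
  have hnorm (x : X) : ‖holderExtremizer a w g x * w x‖ = ‖‖w x / g x‖ ^ (a + 1)‖ := by
    rw [holderExtremizer, div_mul_eq_mul_div, mul_div_assoc, norm_mul,
      Real.rpow_add_one' (norm_nonneg _) ha1.ne']
    simp
  rw [eLpNorm_holderExtremizer_mul_right ha, eLpNorm_congr_norm_ae (.of_forall hnorm),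
    eLpNorm_norm_rpow _ ha1, hpq, hrq, ENNReal.rpow_add_of_nonneg _ _ ha.le zero_le_one,
    ENNReal.rpow_one]

lemma measure_holderExtremizer_mul_ne_zero {v : X → 𝕜} (hgv : ∀ x, g x = 0 → v x = 0)
    (h : μ {x | w x * v x ≠ 0} ≠ 0) : μ {x | holderExtremizer a w g x * v x ≠ 0} ≠ 0 := by
  refine fun hnull => h (measure_mono_null (fun x hx => ?_) hnull)
  obtain ⟨hwx, hvx⟩ := mul_ne_zero_iff.1 hx
  exact mul_ne_zero (holderExtremizer_ne_zero hwx (mt (hgv x) hvx)) hvx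

end Holder

/-- The weight `(|w₁|² + t |w₂|²) ^ (1 / 2)` occurring in `M2`, with complex values so that it can
be a denominator there. -/
def combinedWeight {X : Type*} (w₁ w₂ : X → ℂ) (t : ℝ) (x : X) : ℂ :=
  ((Real.sqrt (‖w₁ x‖ ^ 2 + t * ‖w₂ x‖ ^ 2) : ℝ) : ℂ)

section CombinedWeight

variable {X : Type*} {φ w₁ w₂ : X → ℂ} {t : ℝ}

lemma norm_combinedWeight_sq (ht : 0 ≤ t) (x : X) :
    ‖combinedWeight w₁ w₂ t x‖ ^ 2 = ‖w₁ x‖ ^ 2 + t * ‖w₂ x‖ ^ 2 := by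
  rw [combinedWeight, Complex.norm_real, Real.norm_of_nonneg (Real.sqrt_nonneg _),
    Real.sq_sqrt (by positivity)]

lemma combinedWeight_eq_zero_iff (ht : 0 < t) {x : X} :
    combinedWeight w₁ w₂ t x = 0 ↔ w₁ x = 0 ∧ w₂ x = 0 := by
  rw [← norm_eq_zero, ← sq_eq_zero_iff, norm_combinedWeight_sq ht.le,
    add_eq_zero_iff_of_nonneg (by positivity) (by positivity)]
  simp [ht.ne']

variable [MeasurableSpace X] {μ : Measure X}

lemma measurable_combinedWeight (hw₁ : Measurable w₁) (hw₂ : Measurable w₂) :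
    Measurable (combinedWeight w₁ w₂ t) := by
  unfold combinedWeight
  fun_prop

lemma eLpNorm_mul_combinedWeight (h : AEStronglyMeasurable (fun x => φ x * w₁ x) μ)
    (ht : 0 ≤ t) :
    eLpNorm (fun x => φ x * combinedWeight w₁ w₂ t x) 2 μ =
      (eLpNorm (fun x => φ x * w₁ x) 2 μ ^ 2 +
        ENNReal.ofReal t * eLpNorm (fun x => φ x * w₂ x) 2 μ ^ 2) ^ (1 / 2 : ℝ) := by
  have eLpNorm_sq (f : X → ℂ) : eLpNorm f 2 μ ^ 2 = ∫⁻ x, ‖f x‖ₑ ^ 2 ∂μ := by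
    simpa using eLpNorm_nnreal_pow_eq_lintegral (f := f) (μ := μ) two_ne_zero
  have enorm_sq (x : X) : ‖φ x * combinedWeight w₁ w₂ t x‖ₑ ^ 2 =
      ‖φ x * w₁ x‖ₑ ^ 2 + ENNReal.ofReal t * ‖φ x * w₂ x‖ₑ ^ 2 := by
    simp only [← ofReal_norm, ← ENNReal.ofReal_pow (norm_nonneg _)]
    rw [← ENNReal.ofReal_mul ht, ← ENNReal.ofReal_add (by positivity) (by positivity)]
    simp only [norm_mul, mul_pow, norm_combinedWeight_sq ht]
    ring_nf
  have hsplit : eLpNorm (fun x => φ x * combinedWeight w₁ w₂ t x) 2 μ ^ 2 =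
      eLpNorm (fun x => φ x * w₁ x) 2 μ ^ 2 +
        ENNReal.ofReal t * eLpNorm (fun x => φ x * w₂ x) 2 μ ^ 2 := by
    simp only [eLpNorm_sq, enorm_sq]
    rw [lintegral_add_left' (h.enorm.pow_const 2), lintegral_const_mul' _ _ ENNReal.ofReal_ne_top]
  rw [← hsplit, ← ENNReal.rpow_natCast_mul]
  norm_num

lemma memLp_mul_of_memLp_mul_combinedWeight (hw₁ : AEStronglyMeasurable (fun x => φ x * w₁ x) μ)
    (hw₂ : AEStronglyMeasurable (fun x => φ x * w₂ x) μ) (ht : 0 < t)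
    (h : MemLp (fun x => φ x * combinedWeight w₁ w₂ t x) 2 μ) :
    MemLp (fun x => φ x * w₁ x) 2 μ ∧ MemLp (fun x => φ x * w₂ x) 2 μ := by
  have hsum : eLpNorm (fun x => φ x * w₁ x) 2 μ ^ 2 +
      ENNReal.ofReal t * eLpNorm (fun x => φ x * w₂ x) 2 μ ^ 2 ≠ ∞ := by
    intro htop
    apply h.eLpNorm_ne_top
    rw [eLpNorm_mul_combinedWeight hw₁ ht.le, htop, ENNReal.top_rpow_of_pos (by norm_num)]
  obtain ⟨h₁, h₂⟩ := ENNReal.add_ne_top.1 hsum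
  refine ⟨⟨hw₁, lt_top_iff_ne_top.2 fun htop => h₁ ?_⟩,
    ⟨hw₂, lt_top_iff_ne_top.2 fun htop => h₂ ?_⟩⟩
  · simp [htop]
  · simp [htop, ENNReal.mul_top, ht]

end CombinedWeight

lemma holderTriple_two_ofReal {q : ℝ} (hq0 : 0 < q) (hq2 : q < 2) :
    ENNReal.HolderTriple 2 (ENNReal.ofReal (2 * q / (2 - q))) (ENNReal.ofReal q) := by
  have hq2' : 0 < 2 - q := sub_pos.2 hq2
  have hp : 0 < 2 * q / (2 - q) := div_pos (by positivity) hq2'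
  constructor
  rw [← ENNReal.ofReal_ofNat 2, ← ENNReal.ofReal_inv_of_pos two_pos,
    ← ENNReal.ofReal_inv_of_pos hp, ← ENNReal.ofReal_inv_of_pos hq0,
    ← ENNReal.ofReal_add (by positivity) (by positivity)]
  congr 1
  field_simp
  ring

lemma exists_holderExtremizer_exponent {q : ℝ} (hq0 : 0 < q) (hq2 : q < 2) :
    ∃ a : ℝ, 0 < a ∧ 2 * ENNReal.ofReal a = ENNReal.ofReal (2 * q / (2 - q)) ∧
      ENNReal.ofReal q * ENNReal.ofReal (a + 1) = ENNReal.ofReal (2 * q / (2 - q)) := by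
  have hq2' : 0 < 2 - q := sub_pos.2 hq2
  refine ⟨q / (2 - q), div_pos hq0 hq2', ?_, ?_⟩
  · rw [← ENNReal.ofReal_ofNat 2, ← ENNReal.ofReal_mul zero_le_two, mul_div_assoc]
  · rw [← ENNReal.ofReal_mul hq0.le]
    congr 1
    field_simp
    ring

lemma ofReal_two_mul_div_two_sub_ne_zero {q : ℝ} (hq0 : 0 < q) (hq2 : q < 2) :
    ENNReal.ofReal (2 * q / (2 - q)) ≠ 0 :=
  (ENNReal.ofReal_pos.2 (div_pos (by positivity) (sub_pos.2 hq2))).ne'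

section SharpBounds

variable {X : Type*} [MeasurableSpace X] {μ : Measure X} {q κ t : ℝ} {w w₁ w₂ : X → ℂ}

lemma eLpNorm_ne_zero_of_measure_ne_zero {E : Type*} [NormedAddCommGroup E] {f : X → E}
    {p : ℝ≥0∞} (hp : p ≠ 0) (hf : AEStronglyMeasurable f μ) (h : μ {x | f x ≠ 0} ≠ 0) :
    eLpNorm f p μ ≠ 0 :=
  fun h0 => h (ae_iff.1 ((eLpNorm_eq_zero_iff hf hp).1 h0))

lemma M1_le_sharpConst_mul_M2 (hq0 : 0 < q) (hq2 : q < 2) (hκ0 : 0 < κ) (hκ1 : κ < 1)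
    (hw : Measurable w) (hw₁ : Measurable w₁) (hw₂ : Measurable w₂)
    (h0 : ∀ x, w₁ x = 0 → w₂ x = 0 → w x = 0) :
    M1 μ q κ w w₁ w₂ ≤ sharpConst κ * M2 μ q κ w w₁ w₂ := by
  have := holderTriple_two_ofReal hq0 hq2
  refine iSup₂_le fun φ ⟨hφ, hφw₁, hφw₂, hne₁, hne₂⟩ => ENNReal.div_le_of_le_mul ?_
  obtain ⟨t, ht, hopt⟩ := exists_sharpConst_mul_eq hκ0 hκ1
    (eLpNorm_ne_zero_of_measure_ne_zero two_ne_zero hφw₁.1 hne₁) hφw₁.eLpNorm_ne_top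
    (eLpNorm_ne_zero_of_measure_ne_zero two_ne_zero hφw₂.1 hne₂) hφw₂.eLpNorm_ne_top
  rw [← eLpNorm_mul_combinedWeight hφw₁.1 ht.le] at hopt
  set N := eLpNorm (fun x => w x / combinedWeight w₁ w₂ t x) (ENNReal.ofReal (2 * q / (2 - q))) μ
  set D := eLpNorm (fun x => φ x * w₁ x) 2 μ ^ κ * eLpNorm (fun x => φ x * w₂ x) 2 μ ^ (1 - κ)
  have hg : Measurable (combinedWeight w₁ w₂ t) := measurable_combinedWeight hw₁ hw₂
  calc eLpNorm (fun x => φ x * w x) (ENNReal.ofReal q) μ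
      ≤ eLpNorm (fun x => φ x * combinedWeight w₁ w₂ t x) 2 μ * N :=
        eLpNorm_mul_le_eLpNorm_mul_mul_eLpNorm_div (hφ.mul hg).aestronglyMeasurable
          (hw.div hg).aestronglyMeasurable fun x hx =>
            h0 x ((combinedWeight_eq_zero_iff ht).1 hx).1 ((combinedWeight_eq_zero_iff ht).1 hx).2
    _ = sharpConst κ * (ENNReal.ofReal (t ^ ((1 - κ) / 2)) * N) * D := by rw [← hopt]; ring
    _ ≤ sharpConst κ * M2 μ q κ w w₁ w₂ * D := by
        gcongr
        exact le_iSup₂_of_le t ht le_rfl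

lemma le_M1_of_mul_le {φ : X → ℂ} {c : ℝ≥0∞} (hφ : Measurable φ)
    (hφw₁ : MemLp (fun x => φ x * w₁ x) 2 μ) (hφw₂ : MemLp (fun x => φ x * w₂ x) 2 μ)
    (hne₁ : μ {x | φ x * w₁ x ≠ 0} ≠ 0) (hne₂ : μ {x | φ x * w₂ x ≠ 0} ≠ 0)
    (hκ0 : 0 ≤ κ) (hκ1 : κ ≤ 1)
    (hc : c * (eLpNorm (fun x => φ x * w₁ x) 2 μ ^ κ * eLpNorm (fun x => φ x * w₂ x) 2 μ ^ (1 - κ))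
      ≤ eLpNorm (fun x => φ x * w x) (ENNReal.ofReal q) μ) :
    c ≤ M1 μ q κ w w₁ w₂ := by
  refine le_iSup₂_of_le φ ⟨hφ, hφw₁, hφw₂, hne₁, hne₂⟩ ?_
  have rpow_ne_zero {f : X → ℂ} (hf : MemLp f 2 μ) (hne : μ {x | f x ≠ 0} ≠ 0) (r : ℝ) :
      eLpNorm f 2 μ ^ r ≠ 0 :=
    (ENNReal.rpow_pos (eLpNorm_ne_zero_of_measure_ne_zero two_ne_zero hf.1 hne).bot_lt
      hf.eLpNorm_ne_top).ne'
  refine (ENNReal.le_div_iff_mul_le (.inl ?_) (.inl ?_)).2 hc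
  · exact mul_ne_zero (rpow_ne_zero hφw₁ hne₁ κ) (rpow_ne_zero hφw₂ hne₂ (1 - κ))
  · exact ENNReal.mul_ne_top (ENNReal.rpow_ne_top_of_nonneg hκ0 hφw₁.eLpNorm_ne_top)
      (ENNReal.rpow_ne_top_of_nonneg (sub_nonneg.2 hκ1) hφw₂.eLpNorm_ne_top)

lemma sharpConst_mul_eLpNorm_div_le_M1_of_memLp (hq0 : 0 < q) (hq2 : q < 2) (hκ0 : 0 < κ)
    (hκ1 : κ < 1) (hw : Measurable w) (hw₁ : Measurable w₁) (hw₂ : Measurable w₂)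
    (h1 : μ {x | w x * w₁ x ≠ 0} ≠ 0) (h2 : μ {x | w x * w₂ x ≠ 0} ≠ 0) (ht : 0 < t)
    (hmem : MemLp (fun x => w x / combinedWeight w₁ w₂ t x)
      (ENNReal.ofReal (2 * q / (2 - q))) μ) :
    sharpConst κ * (ENNReal.ofReal (t ^ ((1 - κ) / 2)) *
      eLpNorm (fun x => w x / combinedWeight w₁ w₂ t x) (ENNReal.ofReal (2 * q / (2 - q))) μ) ≤
      M1 μ q κ w w₁ w₂ := by
  obtain ⟨a, ha, h2a, hqa⟩ := exists_holderExtremizer_exponent hq0 hq2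
  set p := ENNReal.ofReal (2 * q / (2 - q))
  set g := combinedWeight w₁ w₂ t
  set φ := holderExtremizer a w g
  have hg : Measurable g := measurable_combinedWeight hw₁ hw₂
  have hφ : Measurable φ := measurable_holderExtremizer hw hg
  have hφg : MemLp (fun x => φ x * g x) 2 μ := by
    refine ⟨(hφ.mul hg).aestronglyMeasurable, lt_top_iff_ne_top.2 ?_⟩
    rw [eLpNorm_holderExtremizer_mul_right ha, h2a]
    exact ENNReal.rpow_ne_top_of_nonneg ha.le hmem.eLpNorm_ne_top
  obtain ⟨hφw₁, hφw₂⟩ := memLp_mul_of_memLp_mul_combinedWeight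
    (hφ.mul hw₁).aestronglyMeasurable (hφ.mul hw₂).aestronglyMeasurable ht hφg
  refine le_M1_of_mul_le hφ hφw₁ hφw₂
    (measure_holderExtremizer_mul_ne_zero
      (fun x hx => ((combinedWeight_eq_zero_iff ht).1 hx).1) h1)
    (measure_holderExtremizer_mul_ne_zero
      (fun x hx => ((combinedWeight_eq_zero_iff ht).1 hx).2) h2) hκ0.le hκ1.le ?_
  set T := ENNReal.ofReal (t ^ ((1 - κ) / 2))
  set N := eLpNorm (fun x => w x / g x) p μ
  set D := eLpNorm (fun x => φ x * w₁ x) 2 μ ^ κ * eLpNorm (fun x => φ x * w₂ x) 2 μ ^ (1 - κ)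
  calc sharpConst κ * (T * N) * D
      = sharpConst κ * (T * D) * N := by ring
    _ ≤ eLpNorm (fun x => φ x * g x) 2 μ * N := by
        rw [eLpNorm_mul_combinedWeight hφw₁.1 ht.le]
        gcongr
        exact sharpConst_mul_le hκ0 hκ1 ht _ _
    _ = eLpNorm (fun x => φ x * w x) (ENNReal.ofReal q) μ :=
        (eLpNorm_holderExtremizer_mul_left ha h2a hqa).symm

lemma M1_restrict_le {E : Set X} (hE : MeasurableSet E) :
    M1 (μ.restrict E) q κ w w₁ w₂ ≤ M1 μ q κ w w₁ w₂ := by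
  refine iSup₂_le fun φ ⟨hφ, hφw₁, hφw₂, hne₁, hne₂⟩ => ?_
  have hmul (v : X → ℂ) :
      (fun x => E.indicator φ x * v x) = E.indicator fun x => φ x * v x := by
    ext x
    exact (indicator_mul_left E φ v).symm
  have hmeas (v : X → ℂ) :
      μ {x | E.indicator φ x * v x ≠ 0} = μ.restrict E {x | φ x * v x ≠ 0} := by
    rw [Measure.restrict_apply' hE, inter_comm]
    exact congrArg μ ((congrArg support (hmul v)).trans support_indicator)
  refine le_iSup₂_of_le (E.indicator φ) ⟨hφ.indicator hE, ?_, ?_, ?_, ?_⟩ ?_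
  · rwa [hmul, memLp_indicator_iff_restrict hE]
  · rwa [hmul, memLp_indicator_iff_restrict hE]
  · rwa [hmeas]
  · rwa [hmeas]
  · simp only [hmul, eLpNorm_indicator_eq_eLpNorm_restrict hE, le_refl]

lemma sharpConst_mul_M2_le_M1 (hq0 : 0 < q) (hq2 : q < 2) (hκ0 : 0 < κ) (hκ1 : κ < 1)
    (hw : Measurable w) (hw₁ : Measurable w₁) (hw₂ : Measurable w₂)
    (h1 : μ {x | w x * w₁ x ≠ 0} ≠ 0) (h2 : μ {x | w x * w₂ x ≠ 0} ≠ 0)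
    [SigmaFinite (μ.restrict (support w))] :
    sharpConst κ * M2 μ q κ w w₁ w₂ ≤ M1 μ q κ w w₁ w₂ := by
  simp only [M2, ENNReal.mul_iSup]
  refine iSup₂_le fun t ht => ?_
  have hp0 := ofReal_two_mul_div_two_sub_ne_zero hq0 hq2
  obtain ⟨A, hA, hAm, hAuniv, hmem⟩ := exists_monotone_memLp_restrict (μ := μ)
    (hw.div (measurable_combinedWeight (t := t) hw₁ hw₂)).aestronglyMeasurable
    (measurableSet_support hw) (fun x hx => (div_ne_zero_iff.1 hx).1) hp0 ENNReal.ofReal_ne_top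
  have hlim := ENNReal.Tendsto.const_mul (a := sharpConst κ)
    (ENNReal.Tendsto.const_mul (a := ENNReal.ofReal (t ^ ((1 - κ) / 2)))
      (tendsto_eLpNorm_restrict (μ := μ) (f := fun x => w x / combinedWeight w₁ w₂ t x)
        hA hAuniv hp0 ENNReal.ofReal_ne_top)
      (.inr ENNReal.ofReal_ne_top)) (.inr ENNReal.ofReal_ne_top)
  refine le_of_tendsto hlim ?_
  filter_upwards [(tendsto_restrict_apply hA hAm hAuniv _).eventually_ne h1,
    (tendsto_restrict_apply hA hAm hAuniv _).eventually_ne h2] with n h1n h2n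
  exact (sharpConst_mul_eLpNorm_div_le_M1_of_memLp hq0 hq2 hκ0 hκ1 hw hw₁ hw₂ h1n h2n ht
    (hmem n)).trans (M1_restrict_le (hAm n))

lemma sigmaFinite_restrict_support_of_memLp_div (hq0 : 0 < q) (hq2 : q < 2) (ht : 0 < t)
    (h0 : ∀ x, w₁ x = 0 → w₂ x = 0 → w x = 0)
    (hmem : MemLp (fun x => w x / combinedWeight w₁ w₂ t x)
      (ENNReal.ofReal (2 * q / (2 - q))) μ) :
    SigmaFinite (μ.restrict (support w)) := by
  have hsupp : support w = support fun x => w x / combinedWeight w₁ w₂ t x := by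
    ext x
    simp only [mem_support, ne_eq, div_eq_zero_iff, combinedWeight_eq_zero_iff ht]
    exact not_congr (or_iff_left_of_imp fun h => h0 x h.1 h.2).symm
  rw [hsupp]
  exact sigmaFinite_restrict_support_of_memLp hmem (ofReal_two_mul_div_two_sub_ne_zero hq0 hq2)
    ENNReal.ofReal_ne_top

end SharpBounds

theorem stmt0_general {X : Type*} [MeasurableSpace X] (μ : Measure X) (q κ : ℝ)
    (hq0 : 0 < q) (hq2 : q < 2) (hκ0 : 0 < κ) (hκ1 : κ < 1)
    (w w₁ w₂ : X → ℂ) (hw : Measurable w) (hw₁ : Measurable w₁) (hw₂ : Measurable w₂)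
    (h1 : μ {x | w x * w₁ x ≠ 0} ≠ 0) (h2 : μ {x | w x * w₂ x ≠ 0} ≠ 0)
    (h0 : ∀ x, w₁ x = 0 → w₂ x = 0 → w x = 0) :
    M1 μ q κ w w₁ w₂ ≤
      ENNReal.ofReal ((1 - κ) ^ ((κ - 1) / 2) * κ ^ (-(κ / 2))) * M2 μ q κ w w₁ w₂ ∧
    (SigmaFinite (μ.restrict (support w)) →
      M1 μ q κ w w₁ w₂ =
        ENNReal.ofReal ((1 - κ) ^ ((κ - 1) / 2) * κ ^ (-(κ / 2))) * M2 μ q κ w w₁ w₂) := by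
  have hle := M1_le_sharpConst_mul_M2 (μ := μ) hq0 hq2 hκ0 hκ1 hw hw₁ hw₂ h0
  exact ⟨hle, fun _ => hle.antisymm (sharpConst_mul_M2_le_M1 hq0 hq2 hκ0 hκ1 hw hw₁ hw₂ h1 h2)⟩

/-- `M₁ ≤ (1-κ)^{(κ-1)/2} κ^{-κ/2} M₂`, with equality when `μ` is
σ-finite or when `w (|w₁|² + t₊|w₂|²)^{-1/2} ∈ L^{2q/(2-q)}` for some `t₊ > 0`. -/
theorem stmt0 {X : Type*} [MeasurableSpace X] (μ : Measure X) (q κ : ℝ)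
    (hq1 : 1 ≤ q) (hq2 : q < 2) (hκ0 : 0 < κ) (hκ1 : κ < 1)
    (w w₁ w₂ : X → ℂ) (hw : Measurable w) (hw₁ : Measurable w₁) (hw₂ : Measurable w₂)
    (h1 : μ {x | w x * w₁ x ≠ 0} ≠ 0) (h2 : μ {x | w x * w₂ x ≠ 0} ≠ 0)
    (h0 : ∀ x, w₁ x = 0 → w₂ x = 0 → w x = 0) :
    M1 μ q κ w w₁ w₂ ≤
      ENNReal.ofReal ((1 - κ) ^ ((κ - 1) / 2) * κ ^ (-(κ / 2))) * M2 μ q κ w w₁ w₂ ∧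
    ((SigmaFinite μ ∨ ∃ t : ℝ, 0 < t ∧
        MemLp (fun x => w x / ((Real.sqrt (‖w₁ x‖ ^ 2 + t * ‖w₂ x‖ ^ 2) : ℝ) : ℂ))
          (ENNReal.ofReal (2 * q / (2 - q))) μ) →
      M1 μ q κ w w₁ w₂ =
        ENNReal.ofReal ((1 - κ) ^ ((κ - 1) / 2) * κ ^ (-(κ / 2))) * M2 μ q κ w w₁ w₂) :=
  (stmt0_general μ q κ (by linarith) hq2 hκ0 hκ1 w w₁ w₂ hw hw₁ hw₂ h1 h2 h0).imp_right
    fun h hσ => h <| hσ.elim (fun _ => inferInstance) fun ⟨_, ht, hmem⟩ =>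
      sigmaFinite_restrict_support_of_memLp_div (by linarith) hq2 ht h0 hmem

end
end

section
/- Let N ≥ 1 and σ > 0 with Nσ > 4. Then E_min(m) = -∞ for every m > 0. -/
open MeasureTheory Filter Topology

noncomputable section

abbrev Esp (N : ℕ) := EuclideanSpace ℝ (Fin N)

/-- Smooth compactly supported test functions. -/
def TestFun {N : ℕ} (φ : Esp N → ℂ) : Prop :=
  ContDiff ℝ (⊤ : ℕ∞) φ ∧ HasCompactSupport φ

/-- Partial derivative in the `i`-th coordinate direction. -/
def pderivC {N : ℕ} (i : Fin N) (φ : Esp N → ℂ) : Esp N → ℂ :=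
  fun x => fderiv ℝ φ x (EuclideanSpace.single i (1 : ℝ))

/-- The Laplacian of a (smooth) function. -/
def lapC {N : ℕ} (φ : Esp N → ℂ) : Esp N → ℂ :=
  fun x => ∑ i, pderivC i (pderivC i φ) x

/-- `v` is the weak `i`-th partial derivative of `u`. -/
def IsWeakPDeriv {N : ℕ} (u : Esp N → ℂ) (i : Fin N) (v : Esp N → ℂ) : Prop :=
  ∀ φ : Esp N → ℂ, TestFun φ → ∫ x, u x * pderivC i φ x = - ∫ x, v x * φ x

/-- `v` is the weak Laplacian of `u`. -/
def IsWeakLap {N : ℕ} (u v : Esp N → ℂ) : Prop :=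
  ∀ φ : Esp N → ℂ, TestFun φ → ∫ x, u x * lapC φ x = ∫ x, v x * φ x

/-- An element of the Sobolev space `H²(ℝ^N, ℂ)`: an `L²` function together with its
weak partial derivatives and its weak Laplacian, all in `L²`. -/
structure H2 (N : ℕ) where
  u : Esp N → ℂ
  grad : Fin N → Esp N → ℂ
  lapl : Esp N → ℂ
  u_mem : MemLp u 2 (volume : Measure (Esp N))
  grad_mem : ∀ i, MemLp (grad i) 2 (volume : Measure (Esp N))
  lapl_mem : MemLp lapl 2 (volume : Measure (Esp N))
  grad_spec : ∀ i, IsWeakPDeriv u i (grad i)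
  lapl_spec : IsWeakLap u lapl

namespace H2

variable {N : ℕ}

/-- `∫ |u|²`. -/
def massSq (U : H2 N) : ℝ := ∫ x, ‖U.u x‖ ^ 2

/-- `∫ |∇u|²`. -/
def gradSq (U : H2 N) : ℝ := ∑ i, ∫ x, ‖U.grad i x‖ ^ 2

/-- `∫ |Δu|²`. -/
def lapSq (U : H2 N) : ℝ := ∫ x, ‖U.lapl x‖ ^ 2

/-- `∫ |u|^{2σ+2}`. -/
def pPow (σ : ℝ) (U : H2 N) : ℝ := ∫ x, ‖U.u x‖ ^ (2 * σ + 2)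

/-- The energy `E(u) = ∫|Δu|² - 2∫|∇u|² - (1/(σ+1))∫|u|^{2σ+2}`. -/
def energy (σ : ℝ) (U : H2 N) : ℝ :=
  U.lapSq - 2 * U.gradSq - (1 / (σ + 1)) * U.pPow σ

/-- The square of the `H²` norm. -/
def h2NormSq (U : H2 N) : ℝ := U.massSq + U.gradSq + U.lapSq

/-- `u` does not vanish almost everywhere. -/
def Nontriv (U : H2 N) : Prop := ¬ (U.u =ᵐ[(volume : Measure (Esp N))] 0)

end H2

/-- `E_min(m) = inf {E(u) : u ∈ H², ∫|u|² = m}`, with values in `EReal`. -/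
def EminE (N : ℕ) (σ m : ℝ) : EReal :=
  ⨅ (U : H2 N) (_ : U.massSq = m), ((U.energy σ : ℝ) : EReal)

/-- The `L^p` norm (as a real number) of a function on `ℝ^N`. -/
def rLp {N : ℕ} (p : ℝ) (f : Esp N → ℂ) : ℝ :=
  (eLpNorm f (ENNReal.ofReal p) (volume : Measure (Esp N))).toReal


/-- The best constant `B(N,σ)` in the Gagliardo–Nirenberg–Sobolev inequality
`‖u‖_{L^{2σ+2}}^{2σ+2} ≤ B ‖Δu‖_{L²}^{Nσ/2} ‖u‖_{L²}^{2+2σ-Nσ/2}`. -/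
def GNconst (N : ℕ) (σ : ℝ) : ℝ :=
  sSup {r : ℝ | ∃ U : H2 N, U.Nontriv ∧
    r = U.pPow σ /
      (rLp 2 U.lapl ^ ((N : ℝ) * σ / 2) * rLp 2 U.u ^ (2 + 2 * σ - (N : ℝ) * σ / 2))}

/-- `k* = (σ+1)^{1/σ} B(N,σ)^{-1/σ}`. -/
def kstar (N : ℕ) (σ : ℝ) : ℝ := (σ + 1) ^ (1 / σ) * GNconst N σ ^ (-(1 / σ))

/-- Strong `H²` convergence of `v k (· + xs k)` to `U`. -/
def H2TendstoTrans {N : ℕ} (v : ℕ → H2 N) (xs : ℕ → Esp N) (U : H2 N) : Prop :=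
  Tendsto (fun k => eLpNorm (fun x => (v k).u (x + xs k) - U.u x) 2
      (volume : Measure (Esp N))) atTop (nhds 0) ∧
  (∀ i, Tendsto (fun k => eLpNorm (fun x => (v k).grad i (x + xs k) - U.grad i x) 2
      (volume : Measure (Esp N))) atTop (nhds 0)) ∧
  Tendsto (fun k => eLpNorm (fun x => (v k).lapl (x + xs k) - U.lapl x) 2
      (volume : Measure (Esp N))) atTop (nhds 0)

/-- `u` is a weak (`H^{-2}`) solution of `Δ²u + 2Δu + (1+c)u - |u|^{2σ}u = 0`. -/
def SolvesSW {N : ℕ} (σ c : ℝ) (U : H2 N) : Prop :=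
  ∀ φ : Esp N → ℂ, TestFun φ →
    (∫ x, U.lapl x * lapC φ x) + 2 * (∫ x, U.lapl x * φ x) +
        ((1 + c : ℝ) : ℂ) * (∫ x, U.u x * φ x) -
        (∫ x, ((‖U.u x‖ ^ (2 * σ) : ℝ) : ℂ) * U.u x * φ x) = 0

/-- `T_c(u) = ∫|Δu|² - 2∫|∇u|² + (1+c)∫|u|²`. -/
def Tfun {N : ℕ} (c : ℝ) (U : H2 N) : ℝ := U.lapSq - 2 * U.gradSq + (1 + c) * U.massSq

/-- `t(c) = inf {T_c(u) : ∫|u|^{2σ+2} = 1}`. -/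
def tmin (N : ℕ) (σ c : ℝ) : ℝ := sInf {r : ℝ | ∃ U : H2 N, U.pPow σ = 1 ∧ r = Tfun c U}

/-- The action `S_c(u) = E(u) + (1+c)‖u‖_{L²}² = T_c(u) - (1/(σ+1))∫|u|^{2σ+2}`. -/
def action {N : ℕ} (σ c : ℝ) (U : H2 N) : ℝ := U.energy σ + (1 + c) * U.massSq

/-!
The dilation `u_s(x) = s^{N/2} u(s x)` keeps the mass of `u` and multiplies `∫|Δu|²`, `∫|∇u|²` and
`∫|u|^{2σ+2}` by `s⁴`, `s²` and `s^{Nσ}`. When `Nσ > 4` the last term dominates as `s → ∞`, so the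
energy tends to `-∞` along the dilations of any `u ∈ H²` with positive finite `∫|u|^{2σ+2}`, and
a multiple of a bump function is such a `u` of mass `m`.
-/

section Analysis

variable {E F : Type*} [NormedAddCommGroup E] [NormedSpace ℝ E] [MeasurableSpace E] [BorelSpace E]
  [FiniteDimensional ℝ E] [NormedAddCommGroup F] (μ : Measure E) [μ.IsAddHaarMeasure]

theorem memLp_comp_smul {p : ENNReal} {f : E → F} {t : ℝ} (hf : MemLp f p μ) (ht : t ≠ 0) :
    MemLp (fun x => f (t • x)) p μ := by
  have h_map : MemLp f p (Measure.map (t • ·) μ) := by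
    rw [Measure.map_addHaar_smul μ ht]
    exact hf.smul_measure ENNReal.ofReal_ne_top
  exact (Homeomorph.smulOfNeZero t ht).measurableEmbedding.memLp_map_measure_iff.1 h_map

theorem integral_norm_smul_comp_smul_rpow [NormedSpace ℝ F] (f : E → F) (c t p : ℝ) :
    ∫ x, ‖c • f (t • x)‖ ^ p ∂μ =
      |c| ^ p * (|t| ^ Module.finrank ℝ E)⁻¹ * ∫ x, ‖f x‖ ^ p ∂μ := by
  simp only [norm_smul, Real.norm_eq_abs, Real.mul_rpow (abs_nonneg c) (norm_nonneg _)]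
  rw [integral_const_mul, Measure.integral_comp_smul μ (fun x => ‖f x‖ ^ p), smul_eq_mul, abs_inv,
    abs_pow, mul_assoc]

theorem integral_norm_smul_comp_smul_sq [NormedSpace ℝ F] (f : E → F) (c t : ℝ) :
    ∫ x, ‖c • f (t • x)‖ ^ 2 ∂μ =
      c ^ 2 * (|t| ^ Module.finrank ℝ E)⁻¹ * ∫ x, ‖f x‖ ^ 2 ∂μ := by
  simpa only [Real.rpow_two, sq_abs] using integral_norm_smul_comp_smul_rpow μ f c t 2

theorem integral_comp_smul_mul {A : Type*} [NormedRing A] [NormedSpace ℝ A] (f g : E → A) {t : ℝ}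
    (ht : t ≠ 0) :
    ∫ x, f (t • x) * g x ∂μ =
      |(t ^ Module.finrank ℝ E)⁻¹| • ∫ x, f x * g (t⁻¹ • x) ∂μ := by
  rw [← Measure.integral_comp_smul μ (fun x => f x * g (t⁻¹ • x))]
  simp only [inv_smul_smul₀ ht]

end Analysis

theorem tendsto_mul_pow_sub_mul_rpow_atBot {n : ℕ} {p : ℝ} (hnp : n < p) (A : ℝ) {B : ℝ}
    (hB : 0 < B) : Tendsto (fun s : ℝ => A * s ^ n - B * s ^ p) atTop atBot := by
  have h_factor : Tendsto (fun s : ℝ => A * s ^ (-(p - n)) - B) atTop (𝓝 (-B)) := by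
    simpa using ((tendsto_rpow_neg_atTop (sub_pos.2 hnp)).const_mul A).sub_const B
  have h_prod := (tendsto_rpow_atTop (n.cast_nonneg.trans_lt hnp)).atTop_mul_neg
    (neg_lt_zero.2 hB) h_factor
  refine h_prod.congr' ?_
  filter_upwards [eventually_gt_atTop 0] with s hs
  have h_pow : s ^ p * s ^ (-(p - n)) = s ^ n := by
    rw [← Real.rpow_add hs, ← Real.rpow_natCast s n]
    congr 1
    ring
  rw [← h_pow]
  ring

theorem rpow_half_rpow_mul_inv_pow {s : ℝ} (hs : 0 < s) (n : ℕ) (p : ℝ) :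
    (s ^ ((n : ℝ) / 2)) ^ p * (s ^ n)⁻¹ = s ^ (n * (p / 2 - 1)) := by
  rw [← Real.rpow_mul hs.le, ← Real.rpow_natCast s n, ← Real.rpow_neg hs.le, ← Real.rpow_add hs]
  congr 1
  ring

theorem rpow_half_sq_mul_inv_pow {s : ℝ} (hs : 0 < s) (n : ℕ) :
    (s ^ ((n : ℝ) / 2)) ^ 2 * (s ^ n)⁻¹ = 1 := by
  simpa using rpow_half_rpow_mul_inv_pow hs n 2

section WeakDerivatives

variable {N : ℕ}

theorem pderivC_comp_smul (i : Fin N) (φ : Esp N → ℂ) (t : ℝ) :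
    pderivC i (fun x => φ (t • x)) = fun x => t • pderivC i φ (t • x) := by
  funext x
  simp only [pderivC, fderiv_comp_smul, smul_apply]

theorem pderivC_const_smul (i : Fin N) (φ : Esp N → ℂ) (t : ℝ) :
    pderivC i (fun x => t • φ x) = fun x => t • pderivC i φ x := by
  funext x
  exact DFunLike.congr_fun (congrFun (fderiv_const_smul_field (𝕜 := ℝ) (f := φ) t) x)
    (EuclideanSpace.single i 1)

theorem lapC_comp_smul (φ : Esp N → ℂ) (t : ℝ) :
    lapC (fun x => φ (t • x)) = fun x => t ^ 2 • lapC φ (t • x) := by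
  funext x
  simp only [lapC, pderivC_comp_smul, pderivC_const_smul, smul_smul, Finset.smul_sum, sq]

namespace TestFun

theorem comp_smul {φ : Esp N → ℂ} (hφ : TestFun φ) {t : ℝ} (ht : t ≠ 0) :
    TestFun (fun x => φ (t • x)) :=
  ⟨hφ.1.comp (contDiff_id.const_smul t), hφ.2.comp_smul ht⟩

theorem pderiv {φ : Esp N → ℂ} (hφ : TestFun φ) (i : Fin N) : TestFun (pderivC i φ) :=
  ⟨(hφ.1.fderiv_right (by simp)).clm_apply contDiff_const, hφ.2.fderiv_apply (𝕜 := ℝ) _⟩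

theorem memLp {φ : Esp N → ℂ} (hφ : TestFun φ) (p : ENNReal) : MemLp φ p volume :=
  hφ.1.continuous.memLp_of_hasCompactSupport hφ.2

theorem integrable_mul {φ ψ : Esp N → ℂ} (hφ : TestFun φ) (hψ : TestFun ψ) :
    Integrable (fun x => φ x * ψ x) :=
  (hφ.1.continuous.mul hψ.1.continuous).integrable_of_hasCompactSupport hφ.2.mul_right

theorem isWeakPDeriv {φ : Esp N → ℂ} (hφ : TestFun φ) (i : Fin N) :
    IsWeakPDeriv φ i (pderivC i φ) := fun ψ hψ =>
  integral_mul_fderiv_eq_neg_fderiv_mul_of_integrable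
    ((hφ.pderiv i).integrable_mul hψ) (hφ.integrable_mul (hψ.pderiv i)) (hφ.integrable_mul hψ)
    (fun x _ => hφ.1.differentiable (by simp) x) (fun x _ => hψ.1.differentiable (by simp) x)

theorem isWeakLap {φ : Esp N → ℂ} (hφ : TestFun φ) : IsWeakLap φ (lapC φ) := by
  intro ψ hψ
  simp only [lapC, Finset.mul_sum, Finset.sum_mul]
  rw [integral_finsetSum _ fun i _ => hφ.integrable_mul ((hψ.pderiv i).pderiv i),
    integral_finsetSum _ fun i _ => ((hφ.pderiv i).pderiv i).integrable_mul hψ]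
  refine Finset.sum_congr rfl fun i _ => ?_
  rw [hφ.isWeakPDeriv i _ (hψ.pderiv i), (hφ.pderiv i).isWeakPDeriv i _ hψ, neg_neg]

/-- A test function as an element of `H²`, its weak derivatives being the classical ones; this is
how nonzero elements of `H²` are obtained. -/
def toH2 {φ : Esp N → ℂ} (hφ : TestFun φ) : H2 N where
  u := φ
  grad i := pderivC i φ
  lapl := lapC φ
  u_mem := hφ.memLp 2
  grad_mem i := (hφ.pderiv i).memLp 2
  lapl_mem := memLp_finsetSum _ fun i _ => ((hφ.pderiv i).pderiv i).memLp 2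
  grad_spec := hφ.isWeakPDeriv
  lapl_spec := hφ.isWeakLap

theorem integral_norm_rpow_pos {φ : Esp N → ℂ} (hφ : TestFun φ) {x : Esp N} (hx : φ x ≠ 0) {p : ℝ}
    (hp : 0 < p) : 0 < ∫ y, ‖φ y‖ ^ p :=
  (hφ.1.continuous.norm.rpow_const
      fun _ => Or.inr hp.le).integral_pos_of_hasCompactSupport_nonneg_nonzero
    (hφ.2.comp_left (g := fun z : ℂ => ‖z‖ ^ p) (by simp [hp.ne']))
    (fun _ => by positivity) (Real.rpow_pos_of_pos (norm_pos_iff.2 hx) p).ne'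

end TestFun

theorem exists_testFun_ne_zero (x : Esp N) : ∃ φ : Esp N → ℂ, TestFun φ ∧ φ x ≠ 0 := by
  let b : ContDiffBump x := default
  refine ⟨fun y => (b y : ℂ), ⟨Complex.ofRealCLM.contDiff.comp b.contDiff,
    b.hasCompactSupport.comp_left (g := fun r : ℝ => (r : ℂ)) Complex.ofReal_zero⟩, ?_⟩
  simp [b.one_of_mem_closedBall (Metric.mem_closedBall_self b.rIn_pos.le)]

theorem IsWeakPDeriv.smul_comp_smul {u v : Esp N → ℂ} {i : Fin N} (h : IsWeakPDeriv u i v) (c : ℝ)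
    {t : ℝ} (ht : t ≠ 0) :
    IsWeakPDeriv (fun x => c • u (t • x)) i (fun x => (c * t) • v (t • x)) := by
  intro φ hφ
  -- The substitution `y = t x` moves the dilation onto the test function.
  have h_pderiv : ∀ x, pderivC i φ (t⁻¹ • x) = t • pderivC i (fun y => φ (t⁻¹ • y)) x := fun x => by
    rw [pderivC_comp_smul, smul_inv_smul₀ ht]
  simp only [smul_mul_assoc, integral_smul, integral_comp_smul_mul volume _ _ ht, h_pderiv,
    mul_smul_comm, h _ (hφ.comp_smul (inv_ne_zero ht)), mul_smul, smul_neg]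
  rw [smul_comm t]

theorem IsWeakLap.smul_comp_smul {u v : Esp N → ℂ} (h : IsWeakLap u v) (c : ℝ) {t : ℝ}
    (ht : t ≠ 0) : IsWeakLap (fun x => c • u (t • x)) (fun x => (c * t ^ 2) • v (t • x)) := by
  intro φ hφ
  have h_lap : ∀ x, lapC φ (t⁻¹ • x) = t ^ 2 • lapC (fun y => φ (t⁻¹ • y)) x := fun x => by
    rw [lapC_comp_smul, inv_pow, smul_inv_smul₀ (pow_ne_zero 2 ht)]
  simp only [smul_mul_assoc, integral_smul, integral_comp_smul_mul volume _ _ ht, h_lap,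
    mul_smul_comm, h _ (hφ.comp_smul (inv_ne_zero ht)), mul_smul]
  rw [smul_comm (t ^ 2)]

end WeakDerivatives

namespace H2

variable {N : ℕ}

/-- The rescaled function `x ↦ c u(t x)`, with the weak derivatives given by the chain rule. It
serves both to prescribe the mass (`t = 1`) and to concentrate a function (`dilate`). -/
def rescale (U : H2 N) (c : ℝ) {t : ℝ} (ht : t ≠ 0) : H2 N where
  u x := c • U.u (t • x)
  grad i x := (c * t) • U.grad i (t • x)
  lapl x := (c * t ^ 2) • U.lapl (t • x)
  u_mem := (memLp_comp_smul volume U.u_mem ht).const_smul c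
  grad_mem i := (memLp_comp_smul volume (U.grad_mem i) ht).const_smul (c * t)
  lapl_mem := (memLp_comp_smul volume U.lapl_mem ht).const_smul (c * t ^ 2)
  grad_spec i := (U.grad_spec i).smul_comp_smul c ht
  lapl_spec := U.lapl_spec.smul_comp_smul c ht

section Rescale

variable (U : H2 N) (c : ℝ) {t : ℝ} (ht : t ≠ 0)

theorem massSq_rescale : (U.rescale c ht).massSq = c ^ 2 * (|t| ^ N)⁻¹ * U.massSq := by
  simp only [massSq, rescale, integral_norm_smul_comp_smul_sq, finrank_euclideanSpace_fin]

theorem gradSq_rescale :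
    (U.rescale c ht).gradSq = (c * t) ^ 2 * (|t| ^ N)⁻¹ * U.gradSq := by
  simp only [gradSq, rescale, integral_norm_smul_comp_smul_sq, finrank_euclideanSpace_fin,
    Finset.mul_sum]

theorem lapSq_rescale :
    (U.rescale c ht).lapSq = (c * t ^ 2) ^ 2 * (|t| ^ N)⁻¹ * U.lapSq := by
  simp only [lapSq, rescale, integral_norm_smul_comp_smul_sq, finrank_euclideanSpace_fin]

theorem pPow_rescale (σ : ℝ) :
    (U.rescale c ht).pPow σ = |c| ^ (2 * σ + 2) * (|t| ^ N)⁻¹ * U.pPow σ := by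
  simp only [pPow, rescale, integral_norm_smul_comp_smul_rpow, finrank_euclideanSpace_fin]

end Rescale

theorem gradSq_nonneg (U : H2 N) : 0 ≤ U.gradSq :=
  Finset.sum_nonneg fun _ _ => integral_nonneg fun _ => sq_nonneg _

/-- The mass-preserving dilation `x ↦ s^{N/2} u(s x)`, the family of competitors for `E_min`. -/
def dilate (U : H2 N) {s : ℝ} (hs : 0 < s) : H2 N :=
  U.rescale (s ^ ((N : ℝ) / 2)) hs.ne'

section Dilate

variable (U : H2 N) {s : ℝ} (hs : 0 < s)

theorem massSq_dilate : (U.dilate hs).massSq = U.massSq := by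
  rw [dilate, massSq_rescale, abs_of_pos hs, rpow_half_sq_mul_inv_pow hs, one_mul]

theorem gradSq_dilate : (U.dilate hs).gradSq = s ^ 2 * U.gradSq := by
  rw [dilate, gradSq_rescale, abs_of_pos hs]
  linear_combination s ^ 2 * U.gradSq * rpow_half_sq_mul_inv_pow hs N

theorem lapSq_dilate : (U.dilate hs).lapSq = s ^ 4 * U.lapSq := by
  rw [dilate, lapSq_rescale, abs_of_pos hs]
  linear_combination s ^ 4 * U.lapSq * rpow_half_sq_mul_inv_pow hs N

theorem pPow_dilate (σ : ℝ) : (U.dilate hs).pPow σ = s ^ (N * σ) * U.pPow σ := by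
  rw [dilate, pPow_rescale, abs_of_pos hs, abs_of_pos (Real.rpow_pos_of_pos hs _),
    rpow_half_rpow_mul_inv_pow hs]
  congr 2
  ring

theorem energy_dilate (σ : ℝ) : (U.dilate hs).energy σ =
    s ^ 4 * U.lapSq - 2 * (s ^ 2 * U.gradSq) - 1 / (σ + 1) * (s ^ (N * σ) * U.pPow σ) := by
  rw [energy, lapSq_dilate, gradSq_dilate, pPow_dilate]

end Dilate

theorem exists_massSq_eq_energy_lt (U : H2 N) {σ : ℝ} (hcrit : 4 < N * σ) (hU : 0 < U.pPow σ)
    (K : ℝ) : ∃ V : H2 N, V.massSq = U.massSq ∧ V.energy σ < K := by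
  have hσ : 0 < σ := pos_of_mul_pos_right (four_pos.trans hcrit) N.cast_nonneg
  have h_coeff : 0 < 1 / (σ + 1) * U.pPow σ := mul_pos (one_div_pos.2 (by linarith)) hU
  have h_lim := tendsto_mul_pow_sub_mul_rpow_atBot (n := 4) (by exact_mod_cast hcrit)
    U.lapSq h_coeff
  obtain ⟨s, hsK, hs⟩ := ((h_lim.eventually_lt_atBot K).and (eventually_gt_atTop 0)).exists
  refine ⟨U.dilate hs, U.massSq_dilate hs, lt_of_le_of_lt ?_ hsK⟩
  have h_grad : 0 ≤ s ^ 2 * U.gradSq := mul_nonneg (sq_nonneg s) U.gradSq_nonneg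
  rw [energy_dilate]
  linarith

theorem exists_massSq_eq_pPow_pos (N : ℕ) {σ m : ℝ} (hσ : -1 < σ) (hm : 0 < m) :
    ∃ U : H2 N, U.massSq = m ∧ 0 < U.pPow σ := by
  obtain ⟨φ, hφ, hφ0⟩ := exists_testFun_ne_zero (0 : Esp N)
  have h_mass : 0 < hφ.toH2.massSq := by
    simpa only [massSq, TestFun.toH2, Real.rpow_two] using hφ.integral_norm_rpow_pos hφ0 two_pos
  have h_pow : 0 < hφ.toH2.pPow σ := hφ.integral_norm_rpow_pos hφ0 (by linarith)
  have h_ratio : 0 < m / hφ.toH2.massSq := div_pos hm h_mass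
  refine ⟨hφ.toH2.rescale √(m / hφ.toH2.massSq) one_ne_zero, ?_, ?_⟩
  · rw [massSq_rescale, Real.sq_sqrt h_ratio.le, abs_one, one_pow, inv_one, mul_one,
      div_mul_cancel₀ m h_mass.ne']
  · rw [pPow_rescale]
    positivity

end H2

/-- If `Nσ > 4` then `E_min(m) = -∞` for every `m > 0`. -/
theorem stmt4 (N : ℕ) (σ : ℝ) (hN : 1 ≤ N) (hσ : 0 < σ) (hcrit : 4 < (N : ℝ) * σ) :
    ∀ m : ℝ, 0 < m → EminE N σ m = ⊥ := by
  intro m hm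
  obtain ⟨U, hU_mass, hU_pow⟩ := H2.exists_massSq_eq_pPow_pos N (neg_one_lt_zero.trans hσ) hm
  refine (EReal.eq_bot_iff_forall_lt _).2 fun K => ?_
  obtain ⟨V, hV_mass, hV_energy⟩ := U.exists_massSq_eq_energy_lt hcrit hU_pow K
  calc
    EminE N σ m ≤ V.energy σ := iInf₂_le V (hV_mass.trans hU_mass)
    _ < K := EReal.coe_lt_coe_iff.2 hV_energy

end
end

section
/- Let N ≥ 1 and σ > 0 with Nσ > 4, let a, b, c > 0, and define f : [0,∞) → ℝ by f(t) = at² - 2bt - c·t^{Nσ/2}. Then: (i) f'' is decreasing and has a unique zero t_infl > 0, given by t_infl = (8a/(Nσ(Nσ-2)c))^{2/(Nσ-4)}; (ii) f' is increasing on [0, t_infl] and decreasing on [t_infl, ∞), and f'(t_infl) > 0 if and only if a^{1-Nσ/2}·b^{Nσ/2-2}·c < (8/(Nσ(Nσ-2)))·((Nσ-4)/(Nσ-2))^{Nσ/2-2}; (iii) if f'(t_infl) > 0, then there exist a unique t₁ ∈ (0, t_infl) and a unique t₂ ∈ (t_infl, ∞) with f'(t₁) = f'(t₂) = 0, and f is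 decreasing on [0,t₁], increasing on [t₁,t₂], decreasing on [t₂,∞), and attains its minimum on [0,t₂] at t₁; (iv) if f'(t_infl) > 0 and t₂ ≤ t' < t'', then f(t'') - f(t') ≤ (1/2)(t''-t')²·f''(t₂). -/
open Set

/-!
The function `f''` is strictly decreasing on `[0, ∞)` and vanishes at `t_infl`, so `f'` increases up
to `t_infl` and decreases afterwards. Being concave, `f'` lies below a line of negative slope beyond
`t_infl` and so tends to `-∞`; as moreover `f'(0) = -2b < 0`, positivity of `f'(t_infl)` yields
exactly one zero of `f'` on either side of `t_infl`. On each of `[0, t₁]`, `[t₁, t_infl]`,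
`[t_infl, t₂]`, `[t₂, ∞)` the function `f'` is strictly monotone and has a zero at an endpoint,
which settles the monotonicity of `f`. Beyond `t₂` both `f' ≤ 0` and `f'' ≤ f''(t₂)`, so that (iv)
is Taylor's formula at `t'`.
-/

open Filter

section Monotonicity

variable {g : ℝ → ℝ} {r s : ℝ}

theorem strictMonoOn_Icc_of_strictAntiOn_deriv (hg : ContinuousOn g (Icc r s))
    (hg' : StrictAntiOn (deriv g) (Icc r s)) (hs : 0 ≤ deriv g s) : StrictMonoOn g (Icc r s) := by
  refine strictMonoOn_of_deriv_pos (convex_Icc r s) hg fun x hx ↦ ?_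
  rw [interior_Icc] at hx
  exact hs.trans_lt (hg' (Ioo_subset_Icc_self hx) (right_mem_Icc.2 (hx.1.trans hx.2).le) hx.2)

theorem strictMonoOn_Icc_of_strictMonoOn_deriv (hg : ContinuousOn g (Icc r s))
    (hg' : StrictMonoOn (deriv g) (Icc r s)) (hr : 0 ≤ deriv g r) : StrictMonoOn g (Icc r s) := by
  refine strictMonoOn_of_deriv_pos (convex_Icc r s) hg fun x hx ↦ ?_
  rw [interior_Icc] at hx
  exact hr.trans_lt (hg' (left_mem_Icc.2 (hx.1.trans hx.2).le) (Ioo_subset_Icc_self hx) hx.1)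

theorem strictAntiOn_Icc_of_strictMonoOn_deriv (hg : ContinuousOn g (Icc r s))
    (hg' : StrictMonoOn (deriv g) (Icc r s)) (hs : deriv g s ≤ 0) : StrictAntiOn g (Icc r s) := by
  refine strictAntiOn_of_deriv_neg (convex_Icc r s) hg fun x hx ↦ ?_
  rw [interior_Icc] at hx
  exact (hg' (Ioo_subset_Icc_self hx) (right_mem_Icc.2 (hx.1.trans hx.2).le) hx.2).trans_le hs

theorem strictAntiOn_Ici_of_strictAntiOn_deriv (hg : ContinuousOn g (Ici s))
    (hg' : StrictAntiOn (deriv g) (Ici s)) (hs : deriv g s ≤ 0) : StrictAntiOn g (Ici s) := by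
  refine strictAntiOn_of_deriv_neg (convex_Ici s) hg fun x hx ↦ ?_
  rw [interior_Ici] at hx
  exact (hg' self_mem_Ici (Ioi_subset_Ici_self hx) hx).trans_le hs

theorem strictMonoOn_Icc_of_unimodal_deriv {t₁ t₂ : ℝ} (hg : ContinuousOn g (Icc t₁ t₂))
    (h₁ : t₁ ≤ s) (h₂ : s ≤ t₂) (hmono : StrictMonoOn (deriv g) (Icc t₁ s))
    (hanti : StrictAntiOn (deriv g) (Icc s t₂)) (ht₁ : 0 ≤ deriv g t₁) (ht₂ : 0 ≤ deriv g t₂) :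
    StrictMonoOn g (Icc t₁ t₂) := by
  rw [← Icc_union_Icc_eq_Icc h₁ h₂]
  exact
    (strictMonoOn_Icc_of_strictMonoOn_deriv (hg.mono (Icc_subset_Icc_right h₂)) hmono ht₁).union
      (strictMonoOn_Icc_of_strictAntiOn_deriv (hg.mono (Icc_subset_Icc_left h₁)) hanti ht₂)
      (isGreatest_Icc h₁) (isLeast_Icc h₂)

theorem tendsto_atBot_of_antitoneOn_deriv (hg : ContinuousOn g (Ici s))
    (hg' : AntitoneOn (deriv g) (Ici s)) (hs : deriv g s < 0) : Tendsto g atTop atBot := by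
  have hderiv : ∀ x ∈ interior (Ici s), deriv g x ≤ deriv g s := fun x hx ↦
    hg' self_mem_Ici (interior_subset hx) (interior_subset hx)
  have hdiff : DifferentiableOn ℝ g (interior (Ici s)) := fun x hx ↦
    (differentiableAt_of_deriv_ne_zero ((hderiv x hx).trans_lt hs).ne).differentiableWithinAt
  have hline : ∀ x ∈ Ici s, g x ≤ g s + deriv g s * (x - s) := fun x hx ↦
    sub_le_iff_le_add'.1 <| (convex_Ici s).image_sub_le_mul_sub_of_deriv_le hg hdiff hderiv
      s self_mem_Ici x hx hx
  refine tendsto_atBot_mono' _ (eventually_atTop.2 ⟨s, hline⟩) ?_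
  exact tendsto_atBot_add_const_left _ _ <|
    (tendsto_atTop_add_const_right _ (-s) tendsto_id).const_mul_atTop_of_neg hs

theorem exists_mem_Ioi_eq_zero_of_strictAntiOn_deriv (hg : ContinuousOn g (Ici s))
    (hg' : StrictAntiOn (deriv g) (Ici s)) (hs : deriv g s ≤ 0) (hpos : 0 < g s) :
    ∃ t ∈ Ioi s, g t = 0 := by
  have hsub : Ici (s + 1) ⊆ Ici s := Ici_subset_Ici.2 (lt_add_one s).le
  have hneg : deriv g (s + 1) < 0 :=
    (hg' self_mem_Ici (hsub self_mem_Ici) (lt_add_one s)).trans_le hs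
  have htendsto : Tendsto g atTop atBot :=
    tendsto_atBot_of_antitoneOn_deriv (hg.mono hsub) (hg'.antitoneOn.mono hsub) hneg
  obtain ⟨t, ht, h⟩ := isPreconnected_Ici.intermediate_value_Iic self_mem_Ici
    (le_principal_iff.2 (Ici_mem_atTop s)) hg htendsto (mem_Iic.2 hpos.le)
  have hne : s ≠ t := fun hst ↦ hpos.ne' (hst ▸ h)
  exact ⟨t, lt_of_le_of_ne ht hne, h⟩

end Monotonicity

theorem sub_le_deriv_mul_add_half_sq_mul {f : ℝ → ℝ} {x y K : ℝ} (hxy : x ≤ y)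
    (hf : ContinuousOn f (Icc x y)) (hf' : DifferentiableOn ℝ f (Ioo x y))
    (hd : ContinuousOn (deriv f) (Icc x y)) (hd' : DifferentiableOn ℝ (deriv f) (Ioo x y))
    (hK : ∀ z ∈ Ioo x y, deriv (deriv f) z ≤ K) :
    f y - f x ≤ deriv f x * (y - x) + 1 / 2 * (y - x) ^ 2 * K := by
  have hderiv : ∀ z ∈ Icc x y, deriv f z - deriv f x ≤ K * (z - x) := fun z hz ↦
    (convex_Icc x y).image_sub_le_mul_sub_of_deriv_le hd (by rwa [interior_Icc])
      (by rwa [interior_Icc]) x (left_mem_Icc.2 hxy) z hz hz.1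
  have hremainder : AntitoneOn (fun z ↦ f z - (deriv f x * (z - x) + 1 / 2 * (z - x) ^ 2 * K))
      (Icc x y) := by
    refine antitoneOn_of_hasDerivWithinAt_nonpos (convex_Icc x y) (by fun_prop)
      (f' := fun z ↦ deriv f z - (deriv f x + K * (z - x))) (fun z hz ↦ ?_) (fun z hz ↦ ?_)
    · rw [interior_Icc] at hz
      have hpoly : HasDerivAt (fun z ↦ deriv f x * (z - x) + 1 / 2 * (z - x) ^ 2 * K)
          (deriv f x + K * (z - x)) z := by
        have hsub := (hasDerivAt_id z).sub_const x
        refine ((hsub.const_mul _).add (((hsub.pow 2).const_mul _).mul_const K)).congr_deriv ?_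
        simp only [id]
        ring
      exact (((hf'.differentiableAt (Ioo_mem_nhds hz.1 hz.2)).hasDerivAt).sub
        hpoly).hasDerivWithinAt
    · linarith [hderiv z (interior_subset hz)]
  have h : f y - (deriv f x * (y - x) + 1 / 2 * (y - x) ^ 2 * K) ≤ f x := by
    simpa using hremainder (left_mem_Icc.2 hxy) (right_mem_Icc.2 hxy) hxy
  linarith

/-- The function `t ↦ a t² - 2 b t - c t ^ p` of the theorem, with an arbitrary real exponent `p` in
place of `N σ / 2`. -/
noncomputable def quadSubRpow (a b c p t : ℝ) : ℝ :=
  a * t ^ 2 - 2 * b * t - c * t ^ p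

/-- The inflection point `t_infl` of `quadSubRpow a b c p`, which does not depend on `b`. -/
noncomputable def inflPoint (a c p : ℝ) : ℝ :=
  (2 * a / (p * (p - 1) * c)) ^ (p - 2)⁻¹

section QuadSubRpow

variable {a b c p : ℝ}

theorem hasDerivAt_quadSubRpow (hp : 1 ≤ p) (t : ℝ) :
    HasDerivAt (quadSubRpow a b c p) (2 * a * t - 2 * b - c * p * t ^ (p - 1)) t := by
  have hpow := (Real.hasDerivAt_rpow_const (x := t) (Or.inr hp)).const_mul c
  have hquad := ((hasDerivAt_id t).pow 2).const_mul a
  have hlin := (hasDerivAt_id t).const_mul (2 * b)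
  refine ((hquad.sub hlin).sub hpow).congr_deriv ?_
  simp only [id]
  ring

theorem deriv_quadSubRpow (hp : 1 ≤ p) :
    deriv (quadSubRpow a b c p) = fun t ↦ 2 * a * t - 2 * b - c * p * t ^ (p - 1) :=
  funext fun t ↦ (hasDerivAt_quadSubRpow hp t).deriv

theorem hasDerivAt_deriv_quadSubRpow (hp : 2 ≤ p) (t : ℝ) :
    HasDerivAt (deriv (quadSubRpow a b c p)) (2 * a - c * p * (p - 1) * t ^ (p - 2)) t := by
  rw [deriv_quadSubRpow (by linarith)]
  have hpow := (Real.hasDerivAt_rpow_const (x := t) (p := p - 1) (Or.inr (by linarith))).const_mul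
    (c * p)
  have hlin := ((hasDerivAt_id t).const_mul (2 * a)).sub_const (2 * b)
  refine (hlin.sub hpow).congr_deriv ?_
  rw [show p - 1 - 1 = p - 2 by ring]
  ring

theorem deriv_deriv_quadSubRpow (hp : 2 ≤ p) :
    deriv (deriv (quadSubRpow a b c p)) = fun t ↦ 2 * a - c * p * (p - 1) * t ^ (p - 2) :=
  funext fun t ↦ (hasDerivAt_deriv_quadSubRpow hp t).deriv

theorem differentiable_quadSubRpow (hp : 1 ≤ p) : Differentiable ℝ (quadSubRpow a b c p) :=
  fun t ↦ (hasDerivAt_quadSubRpow hp t).differentiableAt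

theorem differentiable_deriv_quadSubRpow (hp : 2 ≤ p) :
    Differentiable ℝ (deriv (quadSubRpow a b c p)) :=
  fun t ↦ (hasDerivAt_deriv_quadSubRpow hp t).differentiableAt

theorem strictAntiOn_deriv_deriv_quadSubRpow (hp : 2 < p) (hc : 0 < c) :
    StrictAntiOn (deriv (deriv (quadSubRpow a b c p))) (Ici 0) := by
  rw [deriv_deriv_quadSubRpow hp.le]
  intro x hx y _ hxy
  have hcoeff : 0 < c * p * (p - 1) := mul_pos (mul_pos hc (by linarith)) (by linarith)
  have hpow : x ^ (p - 2) < y ^ (p - 2) := Real.rpow_lt_rpow hx hxy (by linarith)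
  simpa only [sub_lt_sub_iff_left] using mul_lt_mul_of_pos_left hpow hcoeff

theorem inflPoint_pos (hp : 1 < p) (ha : 0 < a) (hc : 0 < c) : 0 < inflPoint a c p := by
  have : 0 < p - 1 := by linarith
  unfold inflPoint
  positivity

theorem inflPoint_rpow (hp : 2 < p) (ha : 0 ≤ a) (hc : 0 ≤ c) :
    inflPoint a c p ^ (p - 2) = 2 * a / (p * (p - 1) * c) := by
  have : 0 < p - 1 := by linarith
  exact Real.rpow_inv_rpow (by positivity) (by linarith)

theorem deriv_deriv_quadSubRpow_inflPoint (hp : 2 < p) (ha : 0 ≤ a) (hc : 0 < c) :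
    deriv (deriv (quadSubRpow a b c p)) (inflPoint a c p) = 0 := by
  have : p - 1 ≠ 0 := by linarith
  rw [deriv_deriv_quadSubRpow hp.le]
  simp only [inflPoint_rpow hp ha hc.le]
  field_simp
  ring

theorem strictMonoOn_deriv_quadSubRpow (hp : 2 < p) (ha : 0 ≤ a) (hc : 0 < c) :
    StrictMonoOn (deriv (quadSubRpow a b c p)) (Icc 0 (inflPoint a c p)) :=
  strictMonoOn_Icc_of_strictAntiOn_deriv
    (differentiable_deriv_quadSubRpow hp.le).continuous.continuousOn
    ((strictAntiOn_deriv_deriv_quadSubRpow hp hc).mono Icc_subset_Ici_self)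
    (deriv_deriv_quadSubRpow_inflPoint hp ha hc).ge

theorem strictAntiOn_deriv_quadSubRpow (hp : 2 < p) (ha : 0 < a) (hc : 0 < c) :
    StrictAntiOn (deriv (quadSubRpow a b c p)) (Ici (inflPoint a c p)) :=
  strictAntiOn_Ici_of_strictAntiOn_deriv
    (differentiable_deriv_quadSubRpow hp.le).continuous.continuousOn
    ((strictAntiOn_deriv_deriv_quadSubRpow hp hc).mono
      (Ici_subset_Ici.2 (inflPoint_pos (by linarith) ha hc).le))
    (deriv_deriv_quadSubRpow_inflPoint hp ha.le hc).le

theorem deriv_quadSubRpow_zero (hp : 1 < p) : deriv (quadSubRpow a b c p) 0 = -(2 * b) := by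
  simp [deriv_quadSubRpow hp.le, Real.zero_rpow (sub_pos.2 hp).ne']

theorem deriv_quadSubRpow_inflPoint (hp : 2 < p) (ha : 0 < a) (hc : 0 < c) :
    deriv (quadSubRpow a b c p) (inflPoint a c p) =
      2 * a * ((p - 2) / (p - 1)) * inflPoint a c p - 2 * b := by
  have hp1 : p - 1 ≠ 0 := by linarith
  have hpow : inflPoint a c p ^ (p - 1) = 2 * a / (p * (p - 1) * c) * inflPoint a c p := by
    rw [← inflPoint_rpow hp ha.le hc.le,
      ← Real.rpow_add_one (inflPoint_pos (by linarith) ha hc).ne']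
    ring_nf
  simp only [deriv_quadSubRpow (show 1 ≤ p by linarith), hpow]
  field_simp
  ring

theorem deriv_quadSubRpow_inflPoint_pos_iff (hp : 2 < p) (ha : 0 < a) (hb : 0 ≤ b) (hc : 0 < c) :
    0 < deriv (quadSubRpow a b c p) (inflPoint a c p) ↔
      a ^ (1 - p) * b ^ (p - 2) * c <
        2 / (p * (p - 1)) * ((p - 2) / (p - 1)) ^ (p - 2) := by
  have hp1 : 0 < p - 1 := by linarith
  have hp2 : 0 < p - 2 := by linarith
  set k := (p - 2) / (p - 1)
  have hk : 0 < k := by positivity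
  have hs := inflPoint_pos (a := a) (c := c) (show 1 < p by linarith) ha hc
  have hlhs : (b / a) ^ (p - 2) * (c / a) = a ^ (1 - p) * b ^ (p - 2) * c := by
    rw [Real.div_rpow hb ha.le, show 1 - p = -((p - 2) + 1) by ring, Real.rpow_neg ha.le,
      Real.rpow_add_one ha.ne']
    field_simp
  have hrhs : (k * inflPoint a c p) ^ (p - 2) * (c / a) = 2 / (p * (p - 1)) * k ^ (p - 2) := by
    rw [Real.mul_rpow hk.le hs.le, inflPoint_rpow hp ha.le hc.le]
    field_simp
  calc 0 < deriv (quadSubRpow a b c p) (inflPoint a c p)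
    _ ↔ b / a < k * inflPoint a c p := by
      rw [deriv_quadSubRpow_inflPoint hp ha hc, div_lt_iff₀ ha]
      constructor <;> intro h <;> linarith
    _ ↔ (b / a) ^ (p - 2) < (k * inflPoint a c p) ^ (p - 2) :=
      (Real.rpow_lt_rpow_iff (by positivity) (by positivity) hp2).symm
    _ ↔ (b / a) ^ (p - 2) * (c / a) < (k * inflPoint a c p) ^ (p - 2) * (c / a) :=
      (mul_lt_mul_iff_left₀ (by positivity)).symm
    _ ↔ _ := by rw [hlhs, hrhs]

theorem exists_mem_Ioo_deriv_quadSubRpow_eq_zero (hp : 2 < p) (ha : 0 < a) (hb : 0 < b)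
    (hc : 0 < c) (hpos : 0 < deriv (quadSubRpow a b c p) (inflPoint a c p)) :
    ∃ t ∈ Ioo 0 (inflPoint a c p), deriv (quadSubRpow a b c p) t = 0 := by
  have hzero : deriv (quadSubRpow a b c p) 0 < 0 := by
    rw [deriv_quadSubRpow_zero (by linarith)]
    linarith
  exact intermediate_value_Ioo (inflPoint_pos (by linarith) ha hc).le
    (differentiable_deriv_quadSubRpow hp.le).continuous.continuousOn ⟨hzero, hpos⟩

theorem exists_mem_Ioi_deriv_quadSubRpow_eq_zero (hp : 2 < p) (ha : 0 < a) (hc : 0 < c)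
    (hpos : 0 < deriv (quadSubRpow a b c p) (inflPoint a c p)) :
    ∃ t ∈ Ioi (inflPoint a c p), deriv (quadSubRpow a b c p) t = 0 :=
  exists_mem_Ioi_eq_zero_of_strictAntiOn_deriv
    (differentiable_deriv_quadSubRpow hp.le).continuous.continuousOn
    ((strictAntiOn_deriv_deriv_quadSubRpow hp hc).mono
      (Ici_subset_Ici.2 (inflPoint_pos (by linarith) ha hc).le))
    (deriv_deriv_quadSubRpow_inflPoint hp ha.le hc).le hpos

theorem strictAntiOn_Icc_zero_quadSubRpow (hp : 2 < p) (ha : 0 ≤ a) (hc : 0 < c) {t₁ : ℝ}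
    (ht₁ : t₁ ≤ inflPoint a c p) (h₁ : deriv (quadSubRpow a b c p) t₁ ≤ 0) :
    StrictAntiOn (quadSubRpow a b c p) (Icc 0 t₁) :=
  strictAntiOn_Icc_of_strictMonoOn_deriv
    (differentiable_quadSubRpow (by linarith)).continuous.continuousOn
    ((strictMonoOn_deriv_quadSubRpow hp ha hc).mono (Icc_subset_Icc_right ht₁)) h₁

theorem strictMonoOn_Icc_quadSubRpow (hp : 2 < p) (ha : 0 < a) (hc : 0 < c) {t₁ t₂ : ℝ}
    (ht₁ : t₁ ∈ Icc 0 (inflPoint a c p)) (ht₂ : inflPoint a c p ≤ t₂)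
    (h₁ : 0 ≤ deriv (quadSubRpow a b c p) t₁) (h₂ : 0 ≤ deriv (quadSubRpow a b c p) t₂) :
    StrictMonoOn (quadSubRpow a b c p) (Icc t₁ t₂) :=
  strictMonoOn_Icc_of_unimodal_deriv
    (differentiable_quadSubRpow (by linarith)).continuous.continuousOn ht₁.2 ht₂
    ((strictMonoOn_deriv_quadSubRpow hp ha.le hc).mono (Icc_subset_Icc_left ht₁.1))
    ((strictAntiOn_deriv_quadSubRpow hp ha hc).mono Icc_subset_Ici_self) h₁ h₂

theorem strictAntiOn_Ici_quadSubRpow (hp : 2 < p) (ha : 0 < a) (hc : 0 < c) {t₂ : ℝ}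
    (ht₂ : inflPoint a c p ≤ t₂) (h₂ : deriv (quadSubRpow a b c p) t₂ ≤ 0) :
    StrictAntiOn (quadSubRpow a b c p) (Ici t₂) :=
  strictAntiOn_Ici_of_strictAntiOn_deriv
    (differentiable_quadSubRpow (by linarith)).continuous.continuousOn
    ((strictAntiOn_deriv_quadSubRpow hp ha hc).mono (Ici_subset_Ici.2 ht₂)) h₂

theorem quadSubRpow_sub_le (hp : 2 < p) (ha : 0 < a) (hc : 0 < c) {t₀ x y : ℝ}
    (ht₀ : inflPoint a c p ≤ t₀) (h₀ : deriv (quadSubRpow a b c p) t₀ ≤ 0) (hx : t₀ ≤ x)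
    (hxy : x ≤ y) :
    quadSubRpow a b c p y - quadSubRpow a b c p x ≤
      1 / 2 * (y - x) ^ 2 * deriv (deriv (quadSubRpow a b c p)) t₀ := by
  have hf : Differentiable ℝ (quadSubRpow a b c p) := differentiable_quadSubRpow (by linarith)
  have hf' : Differentiable ℝ (deriv (quadSubRpow a b c p)) :=
    differentiable_deriv_quadSubRpow hp.le
  have ht₀_nonneg : 0 ≤ t₀ := (inflPoint_pos (by linarith) ha hc).le.trans ht₀
  have hneg : deriv (quadSubRpow a b c p) x ≤ 0 :=
    ((strictAntiOn_deriv_quadSubRpow hp ha hc).antitoneOn ht₀ (ht₀.trans hx) hx).trans h₀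
  have htaylor := sub_le_deriv_mul_add_half_sq_mul hxy hf.continuous.continuousOn
    hf.differentiableOn hf'.continuous.continuousOn hf'.differentiableOn fun z hz ↦
      (strictAntiOn_deriv_deriv_quadSubRpow hp hc).antitoneOn ht₀_nonneg
        (ht₀_nonneg.trans (hx.trans hz.1.le)) (hx.trans hz.1.le)
  linarith [mul_nonpos_of_nonpos_of_nonneg hneg (sub_nonneg.2 hxy)]

theorem inflPoint_half (a c q : ℝ) :
    inflPoint a c (q / 2) = (8 * a / (q * (q - 2) * c)) ^ (2 / (q - 4)) := by
  have hbase : 2 * a / (q / 2 * (q / 2 - 1) * c) = 8 * a / (q * (q - 2) * c) := by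
    rw [show q / 2 * (q / 2 - 1) * c = q * (q - 2) * c / 4 by ring, div_div_eq_mul_div]
    ring
  have hexp : (q / 2 - 2)⁻¹ = 2 / (q - 4) := by
    rw [show q / 2 - 2 = (q - 4) / 2 by ring, inv_div]
  rw [inflPoint, hbase, hexp]

theorem deriv_quadSubRpow_half_inflPoint_pos_iff {q : ℝ} (hq : 4 < q) (ha : 0 < a) (hb : 0 ≤ b)
    (hc : 0 < c) :
    0 < deriv (quadSubRpow a b c (q / 2)) (inflPoint a c (q / 2)) ↔
      a ^ (1 - q / 2) * b ^ (q / 2 - 2) * c <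
        8 / (q * (q - 2)) * ((q - 4) / (q - 2)) ^ (q / 2 - 2) := by
  have hcoeff : 2 / (q / 2 * (q / 2 - 1)) = 8 / (q * (q - 2)) := by
    rw [show q / 2 * (q / 2 - 1) = q * (q - 2) / 4 by ring, div_div_eq_mul_div]
    norm_num
  have hratio : (q / 2 - 2) / (q / 2 - 1) = (q - 4) / (q - 2) := by
    rw [show q / 2 - 2 = (q - 4) / 2 by ring, show q / 2 - 1 = (q - 2) / 2 by ring,
      div_div_div_cancel_right₀ two_ne_zero]
  rw [deriv_quadSubRpow_inflPoint_pos_iff (by linarith) ha hb hc, hcoeff, hratio]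

end QuadSubRpow

/-- Elementary properties of `f(t) = a t² - 2 b t - c t^{Nσ/2}` for
`a, b, c > 0` and `Nσ > 4`: monotonicity of `f''`, its unique positive zero `t_infl`
(with explicit formula), the criterion for `f'(t_infl) > 0`, the existence of the two
critical points `t₁ < t_infl < t₂` of `f`, the monotonicity pattern of `f`, the minimality
of `f` at `t₁` on `[0, t₂]`, and the quadratic upper bound beyond `t₂`. -/
theorem stmt17 (N : ℕ) (σ : ℝ) (hN : 1 ≤ N) (hσ : 0 < σ) (hsup : 4 < (N : ℝ) * σ)
    (a b c : ℝ) (ha : 0 < a) (hb : 0 < b) (hc : 0 < c)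
    (f : ℝ → ℝ) (hf : f = fun t : ℝ => a * t ^ 2 - 2 * b * t - c * t ^ ((N : ℝ) * σ / 2))
    (tinfl : ℝ)
    (htinfl : tinfl =
      (8 * a / ((N : ℝ) * σ * ((N : ℝ) * σ - 2) * c)) ^ (2 / ((N : ℝ) * σ - 4))) :
    -- (i)
    (StrictAntiOn (fun t => deriv (deriv f) t) (Ici (0 : ℝ)) ∧
      0 < tinfl ∧ deriv (deriv f) tinfl = 0 ∧
      (∀ t : ℝ, 0 < t → deriv (deriv f) t = 0 → t = tinfl)) ∧
    -- (ii)
    (StrictMonoOn (deriv f) (Icc 0 tinfl) ∧ StrictAntiOn (deriv f) (Ici tinfl) ∧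
      (0 < deriv f tinfl ↔
        a ^ (1 - (N : ℝ) * σ / 2) * b ^ ((N : ℝ) * σ / 2 - 2) * c <
          8 / ((N : ℝ) * σ * ((N : ℝ) * σ - 2)) *
            (((N : ℝ) * σ - 4) / ((N : ℝ) * σ - 2)) ^ ((N : ℝ) * σ / 2 - 2))) ∧
    -- (iii) and (iv)
    (0 < deriv f tinfl →
      ∃ t₁ t₂ : ℝ, t₁ ∈ Ioo 0 tinfl ∧ t₂ ∈ Ioi tinfl ∧
        deriv f t₁ = 0 ∧ deriv f t₂ = 0 ∧
        (∀ t ∈ Ioo (0 : ℝ) tinfl, deriv f t = 0 → t = t₁) ∧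
        (∀ t ∈ Ioi tinfl, deriv f t = 0 → t = t₂) ∧
        StrictAntiOn f (Icc 0 t₁) ∧ StrictMonoOn f (Icc t₁ t₂) ∧ StrictAntiOn f (Ici t₂) ∧
        (∀ t ∈ Icc (0 : ℝ) t₂, f t₁ ≤ f t) ∧
        (∀ t' t'' : ℝ, t₂ ≤ t' → t' < t'' →
          f t'' - f t' ≤ 1 / 2 * (t'' - t') ^ 2 * deriv (deriv f) t₂)) := by
  obtain rfl : f = quadSubRpow a b c (N * σ / 2) := hf
  obtain rfl : tinfl = inflPoint a c (N * σ / 2) := htinfl.trans (inflPoint_half _ _ _).symm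
  have hp : 2 < N * σ / 2 := by linarith
  have hs := inflPoint_pos (one_lt_two.trans hp) ha hc
  have hf'' := strictAntiOn_deriv_deriv_quadSubRpow (a := a) (b := b) hp hc
  have hinfl := deriv_deriv_quadSubRpow_inflPoint (b := b) hp ha.le hc
  have hmono := strictMonoOn_deriv_quadSubRpow (b := b) hp ha.le hc
  have hanti := strictAntiOn_deriv_quadSubRpow (b := b) hp ha hc
  refine ⟨⟨hf'', hs, hinfl, fun t ht h ↦ hf''.injOn ht.le hs.le (h.trans hinfl.symm)⟩,
    ⟨hmono, hanti, deriv_quadSubRpow_half_inflPoint_pos_iff hsup ha hb.le hc⟩, fun hpos ↦ ?_⟩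
  obtain ⟨t₁, ht₁, h₁⟩ := exists_mem_Ioo_deriv_quadSubRpow_eq_zero hp ha hb hc hpos
  obtain ⟨t₂, ht₂, h₂⟩ := exists_mem_Ioi_deriv_quadSubRpow_eq_zero hp ha hc hpos
  have hdecr := strictAntiOn_Icc_zero_quadSubRpow hp ha.le hc ht₁.2.le h₁.le
  have hincr := strictMonoOn_Icc_quadSubRpow hp ha hc (Ioo_subset_Icc_self ht₁) ht₂.le h₁.ge h₂.ge
  refine ⟨t₁, t₂, ht₁, ht₂, h₁, h₂,
    fun t ht h ↦ hmono.injOn (Ioo_subset_Icc_self ht) (Ioo_subset_Icc_self ht₁) (h.trans h₁.symm),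
    fun t ht h ↦ hanti.injOn (Ioi_subset_Ici_self ht) (Ioi_subset_Ici_self ht₂)
      (h.trans h₂.symm), hdecr, hincr,
    strictAntiOn_Ici_quadSubRpow hp ha hc ht₂.le h₂.le,
    fun _ ht ↦ isMinOn_Icc_of_anti_mono hdecr.antitoneOn hincr.monotoneOn ht,
    fun t' t'' ht' htt ↦ quadSubRpow_sub_le hp ha hc ht₂.le h₂.le ht' htt.le⟩
end
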